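/- arXiv:2210.09093 — 4 statements merged into one kernel-verified Lean document; each statement's English description precedes it below -/
import Mathlib

section
/- Let p ≥ 2 be an integer. There exists a constant d_p > 0 with the following property. Let [a,b] be a compact interval, let g be a C^{p−1} real-valued function on [a,b] with |g^{(p−1)}(x)| > 1 for all x ∈ [a,b], and let r ∈ ℝ. Then for every ε > 0, the Lebesgue measure of {x ∈ [a,b] : |(x − r)·g(x)| < ε} is at most d_p · ε^{1/p}. -/
open Set MeasureTheory

/-!
Away from the window `|x - r| < ε ^ (1/p)`, which has measure `2 ε ^ (1/p)`, the inequality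
`|(x - r) g x| < ε` forces `|g x| < ε ^ ((p-1)/p)`. The result therefore follows from the classical
van der Corput type sublevel estimate `sublevel_estimate`: if `|g^{(k)}| ≥ l` on an interval, then
`{|g| < δ}` has measure at most `C_k (δ / l) ^ (1/k)`; it is applied with `k = p - 1` and `l = 1`.

The sublevel estimate is proved by induction on `k`. For `k = 1` the mean value theorem bounds the
diameter of the sublevel set (`volume_sublevel_le`). For the step, `g^{(k)}` is monotone or
antitone because `g^{(k+1)}` does not vanish, so `{g^{(k)} ≥ η}` and `{g^{(k)} ≤ -η}` are intervals,
to which the induction hypothesis applies, while `{|g^{(k)}| < η}` has measure at most `2 η / l`.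
The choice `η = l (δ / l) ^ (1/(k+1))` balances the two contributions.
-/

/-- If `|f'| ≥ l` on an interval, then `f` expands distances by at least `l`, so the set
`{|f| < δ}` has diameter at most `2 δ / l`. -/
lemma volume_sublevel_le {S : Set ℝ} (hS : S.OrdConnected) {f f' : ℝ → ℝ}
    (hf : ∀ x ∈ S, HasDerivWithinAt f (f' x) S x) {l : ℝ} (hl : 0 < l)
    (hf' : ∀ x ∈ S, l ≤ |f' x|) {δ : ℝ} (hδ : 0 < δ) :
    volume {x ∈ S | |f x| < δ} ≤ ENNReal.ofReal (2 * (δ / l)) := by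
  have key : ∀ x ∈ S, ∀ y ∈ S, x < y → l * (y - x) ≤ |f y - f x| := by
    intro x hx y hy hxy
    have hsub : Icc x y ⊆ S := hS.out hx hy
    obtain ⟨c, hc, hce⟩ := exists_hasDerivAt_eq_slope f f' hxy
      (fun z hz => ((hf z (hsub hz)).mono hsub).continuousWithinAt)
      (fun z hz => (hf z (hsub (Ioo_subset_Icc_self hz))).hasDerivAt
        (Filter.mem_of_superset (Icc_mem_nhds hz.1 hz.2) hsub))
    have h1 := hf' c (hsub (Ioo_subset_Icc_self hc))
    rw [hce, abs_div, abs_of_pos (sub_pos.2 hxy), le_div_iff₀ (sub_pos.2 hxy)] at h1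
    exact h1
  refine (Real.volume_le_diam _).trans (Metric.ediam_le ?_)
  have main : ∀ x ∈ {x ∈ S | |f x| < δ}, ∀ y ∈ {x ∈ S | |f x| < δ}, x < y →
      y - x ≤ 2 * (δ / l) := by
    rintro x ⟨hx, hx'⟩ y ⟨hy, hy'⟩ hxy
    have h1 := key x hx y hy hxy
    have h2 : |f y - f x| ≤ 2 * δ := by
      have := abs_sub (f y) (f x)
      linarith
    rw [← mul_div_assoc, le_div_iff₀ hl]
    linarith
  intro x hx y hy
  rw [edist_dist]
  apply ENNReal.ofReal_le_ofReal
  rw [Real.dist_eq]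
  rcases lt_trichotomy x y with h | h | h
  · rw [abs_sub_comm, abs_of_pos (sub_pos.2 h)]
    exact main x hx y hy h
  · subst h
    simp only [sub_self, abs_zero]
    positivity
  · rw [abs_of_pos (sub_pos.2 h)]
    exact main y hy x hx h

lemma monotoneOn_or_antitoneOn_of_deriv_ne_zero {S : Set ℝ} (hS : S.OrdConnected) {f f' : ℝ → ℝ}
    (hf : ∀ x ∈ S, HasDerivWithinAt f (f' x) S x) (hf' : ∀ x ∈ S, f' x ≠ 0) :
    MonotoneOn f S ∨ AntitoneOn f S := by
  have hcont : ContinuousOn f S := fun x hx => (hf x hx).continuousWithinAt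
  have hint : ∀ x ∈ interior S, HasDerivWithinAt f (f' x) (interior S) x := fun x hx =>
    (hf x (interior_subset hx)).mono interior_subset
  rcases hasDerivWithinAt_forall_lt_or_forall_gt_of_forall_ne hS.convex hf hf' with h | h
  · exact Or.inr (antitoneOn_of_hasDerivWithinAt_nonpos hS.convex hcont hint
      fun x hx => (h x (interior_subset hx)).le)
  · exact Or.inl (monotoneOn_of_hasDerivWithinAt_nonneg hS.convex hcont hint
      fun x hx => (h x (interior_subset hx)).le)

lemma ordConnected_superlevel {S : Set ℝ} (hS : S.OrdConnected) {f : ℝ → ℝ}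
    (hf : MonotoneOn f S ∨ AntitoneOn f S) (η : ℝ) : {x ∈ S | η ≤ f x}.OrdConnected := by
  refine ⟨fun x hx y hy z hz => ?_⟩
  have hzS : z ∈ S := hS.out hx.1 hy.1 hz
  rcases hf with h | h
  · exact ⟨hzS, hx.2.trans (h hx.1 hzS hz.1)⟩
  · exact ⟨hzS, hy.2.trans (h hzS hy.1 hz.2)⟩

lemma ordConnected_sublevel {S : Set ℝ} (hS : S.OrdConnected) {f : ℝ → ℝ}
    (hf : MonotoneOn f S ∨ AntitoneOn f S) (η : ℝ) : {x ∈ S | f x ≤ η}.OrdConnected := by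
  refine ⟨fun x hx y hy z hz => ?_⟩
  have hzS : z ∈ S := hS.out hx.1 hy.1 hz
  rcases hf with h | h
  · exact ⟨hzS, (h hzS hy.1 hz.2).trans hy.2⟩
  · exact ⟨hzS, (h hx.1 hzS hz.1).trans hx.2⟩

/-- Sublevel set estimate for a function whose derivative of order `k + 1` is bounded below in
absolute value. The successive derivatives are given as a family `f 0, f 1, …, f (k + 1)`, so that
the hypotheses restrict at once to subintervals of `S`. -/
lemma sublevel_estimate (k : ℕ) : ∃ C : ℝ, 0 < C ∧
    ∀ (S : Set ℝ), S.OrdConnected → ∀ f : ℕ → ℝ → ℝ,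
      (∀ i ≤ k, ∀ x ∈ S, HasDerivWithinAt (f i) (f (i + 1) x) S x) →
      ∀ l : ℝ, 0 < l → (∀ x ∈ S, l ≤ |f (k + 1) x|) → ∀ δ : ℝ, 0 < δ →
        volume {x ∈ S | |f 0 x| < δ} ≤
          ENNReal.ofReal (C * (δ / l) ^ ((1 : ℝ) / ((k : ℝ) + 1))) := by
  induction k with
  | zero =>
    refine ⟨2, two_pos, fun S hS f hf l hl hfl δ hδ => ?_⟩
    simpa using volume_sublevel_le hS (hf 0 le_rfl) hl hfl hδ
  | succ k ih =>
    obtain ⟨C, hC, ih⟩ := ih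
    refine ⟨C + C + 2, by positivity, fun S hS f hf l hl hfl δ hδ => ?_⟩
    set t : ℝ := (δ / l) ^ ((1 : ℝ) / (((k + 1 : ℕ) : ℝ) + 1)) with ht
    have htpos : 0 < t := by positivity
    have hη : 0 < l * t := by positivity
    have hmono := monotoneOn_or_antitoneOn_of_deriv_ne_zero hS (hf (k + 1) le_rfl)
      (fun x hx h0 => by
        have := hfl x hx
        rw [h0, abs_zero] at this
        linarith)
    -- The threshold `η = l * t` is chosen so that `(δ / η) ^ (1 / (k + 1)) = t`.
    have hbal : (δ / (l * t)) ^ ((1 : ℝ) / ((k : ℝ) + 1)) = t := by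
      have hq : 0 < δ / l := by positivity
      have h1 : δ / (l * t) = (δ / l) ^ (1 - (1 : ℝ) / (((k + 1 : ℕ) : ℝ) + 1)) := by
        rw [Real.rpow_sub hq, Real.rpow_one, ← ht, div_div]
      rw [h1, ← Real.rpow_mul hq.le, ht]
      congr 1
      push_cast
      field_simp
      ring
    have hsub : ∀ S' ⊆ S, S'.OrdConnected → (∀ x ∈ S', l * t ≤ |f (k + 1) x|) →
        volume {x ∈ S' | |f 0 x| < δ} ≤ ENNReal.ofReal (C * t) := by
      intro S' hS' hoc hlow
      have := ih S' hoc f (fun i hi x hx => (hf i (by omega) x (hS' hx)).mono hS') (l * t) hη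
        hlow δ hδ
      rwa [hbal] at this
    have h1 := hsub {x ∈ S | l * t ≤ f (k + 1) x} (fun x hx => hx.1)
      (ordConnected_superlevel hS hmono _) (fun x hx => hx.2.trans (le_abs_self _))
    have h2 := hsub {x ∈ S | f (k + 1) x ≤ -(l * t)} (fun x hx => hx.1)
      (ordConnected_sublevel hS hmono _)
      (fun x hx => (le_neg_of_le_neg hx.2).trans (neg_le_abs _))
    have h3 := volume_sublevel_le hS (hf (k + 1) le_rfl) hl hfl hη
    rw [mul_div_cancel_left₀ _ hl.ne'] at h3
    have hcover : {x ∈ S | |f 0 x| < δ} ⊆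
        ({x ∈ {x ∈ S | l * t ≤ f (k + 1) x} | |f 0 x| < δ} ∪
          {x ∈ {x ∈ S | f (k + 1) x ≤ -(l * t)} | |f 0 x| < δ}) ∪
          {x ∈ S | |f (k + 1) x| < l * t} := by
      rintro x ⟨hx, hxδ⟩
      rcases lt_or_ge |f (k + 1) x| (l * t) with h | h
      · exact Or.inr ⟨hx, h⟩
      · rcases le_abs.1 h with h | h
        · exact Or.inl (Or.inl ⟨⟨hx, h⟩, hxδ⟩)
        · exact Or.inl (Or.inr ⟨⟨hx, le_neg_of_le_neg h⟩, hxδ⟩)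
    calc volume {x ∈ S | |f 0 x| < δ}
        ≤ ENNReal.ofReal (C * t) + ENNReal.ofReal (C * t) + ENNReal.ofReal (2 * t) :=
          (measure_mono hcover).trans ((measure_union_le _ _).trans
            (add_le_add ((measure_union_le _ _).trans (add_le_add h1 h2)) h3))
      _ = ENNReal.ofReal ((C + C + 2) * t) := by
          rw [← ENNReal.ofReal_add (by positivity) (by positivity),
            ← ENNReal.ofReal_add (by positivity) (by positivity)]
          congr 1
          ring

/-- **Sublevel set estimate (4.16).** For each integer `p ≥ 2` there is a constant `d_p > 0`
such that: for every compact interval `[a,b]`, every `C^{p-1}` function `g` on `[a,b]` with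
`|g^{(p-1)}(x)| > 1` on `[a,b]`, and every `r ∈ ℝ`, for all `ε > 0` the Lebesgue measure of
`{x ∈ [a,b] : |(x-r)·g(x)| < ε}` is at most `d_p · ε^{1/p}`. -/
theorem stmt16 (p : ℕ) (hp : 2 ≤ p) :
    ∃ dp : ℝ, 0 < dp ∧
      ∀ (a b : ℝ), a ≤ b →
      ∀ g : ℝ → ℝ, ContDiffOn ℝ (p - 1) g (Icc a b) →
      (∀ x ∈ Icc a b, 1 < |iteratedDerivWithin (p - 1) g (Icc a b) x|) →
      ∀ r : ℝ, ∀ ε : ℝ, 0 < ε →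
        volume {x ∈ Icc a b | |(x - r) * g x| < ε} ≤
          ENNReal.ofReal (dp * ε ^ ((1 : ℝ) / (p : ℝ))) := by
  obtain ⟨k, rfl⟩ := Nat.exists_eq_add_of_le' hp
  obtain ⟨C, hC, hest⟩ := sublevel_estimate k
  refine ⟨2 + C, by positivity, fun a b hab g hg hg' r ε hε => ?_⟩
  have hpred : k + 2 - 1 = k + 1 := rfl
  rw [hpred] at hg'
  have hgk : ContDiffOn ℝ ((k + 1 : ℕ) : WithTop ℕ∞) g (Icc a b) := hg
  rcases hab.eq_or_lt with rfl | hab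
  · refine (measure_mono (sep_subset _ _)).trans ?_
    simp
  have huniq := uniqueDiffOn_Icc hab
  set t : ℝ := ε ^ ((1 : ℝ) / ((k + 2 : ℕ) : ℝ)) with ht
  have htpos : 0 < t := by positivity
  -- Dividing `ε` by the width `t` of the window gives the level for `g`, and its `(k+1)`-th root
  -- is again `t`.
  have hbal : (ε / t / 1) ^ ((1 : ℝ) / ((k : ℝ) + 1)) = t := by
    have h1 : ε / t / 1 = ε ^ (1 - (1 : ℝ) / ((k + 2 : ℕ) : ℝ)) := by
      rw [Real.rpow_sub hε, Real.rpow_one, ← ht, div_one]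
    rw [h1, ← Real.rpow_mul hε.le, ht]
    congr 1
    push_cast
    field_simp
    ring
  have h1 := hest (Icc a b) ordConnected_Icc (fun i => iteratedDerivWithin i g (Icc a b))
    (fun i hi x hx => by
      have hd := hgk.differentiableOn_iteratedDerivWithin (m := i)
        (by exact_mod_cast Nat.lt_succ_of_le hi) huniq x hx
      rw [iteratedDerivWithin_succ]
      exact hd.hasDerivWithinAt)
    1 one_pos (fun x hx => (hg' x hx).le) (ε / t) (by positivity)
  rw [hbal] at h1
  simp only [iteratedDerivWithin_zero] at h1
  have hcover : {x ∈ Icc a b | |(x - r) * g x| < ε} ⊆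
      Ioo (r - t) (r + t) ∪ {x ∈ Icc a b | |g x| < ε / t} := by
    rintro x ⟨hx, hxε⟩
    rcases lt_or_ge |x - r| t with h | h
    · rw [abs_lt] at h
      exact Or.inl ⟨by linarith, by linarith⟩
    · refine Or.inr ⟨hx, ?_⟩
      rw [lt_div_iff₀ htpos]
      rw [abs_mul] at hxε
      nlinarith [abs_nonneg (g x)]
  calc volume {x ∈ Icc a b | |(x - r) * g x| < ε}
      ≤ ENNReal.ofReal (2 * t) + ENNReal.ofReal (C * t) := by
        refine (measure_mono hcover).trans ((measure_union_le _ _).trans (add_le_add ?_ h1))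
        rw [Real.volume_Ioo]
        exact ENNReal.ofReal_le_ofReal (by linarith)
    _ = ENNReal.ofReal ((2 + C) * t) := by
        rw [← ENNReal.ofReal_add (by positivity) (by positivity)]
        congr 1
        ring
end

section
/- Let p ≥ 2 be an integer. There exists a constant c > 0, depending only on p, with the following property. Let f be a C^p real-valued function on a compact interval [a,b] with |f^{(p)}(x)| > 1 for all x ∈ [a,b]. Then for all λ ≠ 0, min( b − a, 1 / (|λ| · sup_{x∈[a,b]} |f'(x)|) ) ≤ c · |λ|^{−1/p}. -/
/-!
The heart of the matter is the inequality `K (b - a)^(p-1) ≤ sup |f'|`, where `K > 0` depends only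
on `p`. It is a lower bound for a function whose derivative of order `k = p - 1` is at least `1` in
absolute value, and `exists_subinterval_le_abs` proves it by induction on `k` in a stronger form:
the function is bounded below by `K (b - a)^k` on a whole subinterval of length `(b - a) / 4^k`.
The induction step applies the claim to the derivative, and then `exists_quarter_le_abs`: if
`|g'| ≥ δ` on an interval of length `ℓ`, then by the mean value theorem `g` cannot be smaller than
`δ ℓ / 4` in absolute value both somewhere in the first and somewhere in the last quarter.

Given this inequality, with `M = sup |f'|` the minimum `X` satisfies
`X^p ≤ (b - a)^(p-1) / (|λ| M) ≤ 1 / (K |λ|)`, which is the estimate with `c = K^(-1/p)`.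
-/

open Set MeasureTheory

lemma exists_quarter_le_abs {g g' : ℝ → ℝ} {a b δ : ℝ} (hab : a < b) (hδ : 0 < δ)
    (hg : ∀ x ∈ Icc a b, HasDerivWithinAt g (g' x) (Icc a b) x)
    (hg' : ∀ x ∈ Icc a b, δ ≤ |g' x|) :
    ∃ u v, a ≤ u ∧ v ≤ b ∧ v - u = (b - a) / 4 ∧
      ∀ x ∈ Icc u v, δ * (b - a) / 4 ≤ |g x| := by
  by_cases h : ∀ x ∈ Icc a (a + (b - a) / 4), δ * (b - a) / 4 ≤ |g x|
  · exact ⟨a, a + (b - a) / 4, le_rfl, by linarith, by ring, h⟩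
  refine ⟨b - (b - a) / 4, b, by linarith, le_rfl, by ring, fun y hy => ?_⟩
  push Not at h
  obtain ⟨x, hx, hgx⟩ := h
  by_contra! hgy
  have hxy : (b - a) / 2 ≤ y - x := by linarith [hx.2, hy.1]
  have hlt : x < y := by linarith
  have hax := hx.1
  have hyb := hy.2
  obtain ⟨ξ, hξ, hslope⟩ := exists_hasDerivAt_eq_slope g g' hlt
    (fun z hz => ((hg z ⟨hax.trans hz.1, hz.2.trans hyb⟩).continuousWithinAt.mono
      (Icc_subset_Icc hax hyb)))
    (fun z hz => (hg z ⟨hax.trans hz.1.le, hz.2.le.trans hyb⟩).hasDerivAt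
      (Icc_mem_nhds (hax.trans_lt hz.1) (hz.2.trans_le hyb)))
  have hδξ := hg' ξ ⟨hax.trans hξ.1.le, hξ.2.le.trans hyb⟩
  rw [hslope, abs_div, abs_of_pos (sub_pos.2 hlt), le_div_iff₀ (sub_pos.2 hlt)] at hδξ
  have h1 : δ * ((b - a) / 2) ≤ δ * (y - x) := mul_le_mul_of_nonneg_left hxy hδ.le
  have h2 := abs_sub (g y) (g x)
  linarith

/-- If `F 0, …, F k` are successive derivatives on `[a, b]` and `|F k| ≥ 1`, then `|F 0|` is at
least a constant times `(b - a)^k` on a subinterval of length `(b - a) / 4^k`. Bounding `F 0` on a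
subinterval rather than at a point is what makes the induction on `k` work. -/
lemma exists_subinterval_le_abs (k : ℕ) :
    ∃ K : ℝ, 0 < K ∧ ∀ (F : ℕ → ℝ → ℝ) (a b : ℝ), a < b →
      (∀ i < k, ∀ x ∈ Icc a b, HasDerivWithinAt (F i) (F (i + 1) x) (Icc a b) x) →
      (∀ x ∈ Icc a b, 1 ≤ |F k x|) →
      ∃ u v, a ≤ u ∧ v ≤ b ∧ v - u = (b - a) / 4 ^ k ∧
        ∀ x ∈ Icc u v, K * (b - a) ^ k ≤ |F 0 x| := by
  induction k with
  | zero =>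
    refine ⟨1, one_pos, fun F a b hab _ h => ⟨a, b, le_rfl, le_rfl, by simp, ?_⟩⟩
    simpa using h
  | succ k ih =>
    obtain ⟨K, hK, ih⟩ := ih
    refine ⟨K / 4 ^ (k + 1), by positivity, fun F a b hab hF h => ?_⟩
    obtain ⟨u, v, hau, hvb, huv, hF1⟩ := ih (fun i => F (i + 1)) a b hab
      (fun i hi => hF (i + 1) (by lia)) h
    have hba : 0 < b - a := sub_pos.2 hab
    have hlt : u < v := by
      rw [← sub_pos, huv]
      positivity
    have hsub := Icc_subset_Icc hau hvb
    obtain ⟨u', v', hu, hv, hlen, hF0⟩ := exists_quarter_le_abs hlt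
      (show 0 < K * (b - a) ^ k by positivity)
      (fun x hx => (hF 0 (by lia) x (hsub hx)).mono hsub) hF1
    refine ⟨u', v', hau.trans hu, hv.trans hvb, ?_, fun x hx => ?_⟩
    · rw [hlen, huv, pow_succ]
      field_simp
    · refine le_trans (le_of_eq ?_) (hF0 x hx)
      rw [huv]
      field_simp
      ring

/-- **Estimate (4.7).** For each integer `p ≥ 2` there is a constant `c > 0`, depending only
on `p`, such that: for every compact interval `[a,b]` and every `C^p` function `f` on `[a,b]`
with `|f⁽ᵖ⁾(x)| > 1` on `[a,b]`, for all `λ ≠ 0` one has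
`min(b-a, 1/(|λ|·sup_{[a,b]}|f'|)) ≤ c·|λ|^{-1/p}`. Here `1/(|λ|·sup|f'|)` is interpreted as
`+∞` (so the min is `b - a`) if `f'` vanishes identically on `[a,b]`. -/
theorem stmt17 (p : ℕ) (hp : 2 ≤ p) :
    ∃ c : ℝ, 0 < c ∧
      ∀ (a b : ℝ), a ≤ b →
      ∀ f : ℝ → ℝ, ContDiffOn ℝ p f (Icc a b) →
      (∀ x ∈ Icc a b, 1 < |iteratedDerivWithin p f (Icc a b) x|) →
      ∀ lam : ℝ, lam ≠ 0 →
        (if sSup ((fun x => |iteratedDerivWithin 1 f (Icc a b) x|) '' Icc a b) = 0 then b - a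
         else min (b - a)
           (1 / (|lam| * sSup ((fun x => |iteratedDerivWithin 1 f (Icc a b) x|) '' Icc a b)))) ≤
        c * |lam| ^ (-(1 : ℝ) / (p : ℝ)) := by
  obtain ⟨K, hK, hmain⟩ := exists_subinterval_le_abs (p - 1)
  have hp0 : p ≠ 0 := by lia
  refine ⟨(1 / K) ^ ((p : ℝ)⁻¹), by positivity, fun a b hab f hf hfp lam hlam => ?_⟩
  have hlam' : 0 < |lam| := abs_pos.2 hlam
  rcases hab.eq_or_lt with rfl | hlt
  · have hR : (0 : ℝ) ≤ (1 / K) ^ ((p : ℝ)⁻¹) * |lam| ^ (-(1 : ℝ) / (p : ℝ)) := by positivity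
    split_ifs
    · simpa using hR
    · exact (min_le_left _ _).trans (by simpa using hR)
  set M := sSup ((fun x => |iteratedDerivWithin 1 f (Icc a b) x|) '' Icc a b) with hM
  have hud := uniqueDiffOn_Icc hlt
  have hba : 0 < b - a := sub_pos.2 hlt
  have hbdd : BddAbove ((fun x => |iteratedDerivWithin 1 f (Icc a b) x|) '' Icc a b) :=
    (isCompact_Icc.image_of_continuousOn
      (hf.continuousOn_iteratedDerivWithin (by exact_mod_cast (by lia : 1 ≤ p)) hud).abs).bddAbove
  have hKM : K * (b - a) ^ (p - 1) ≤ M := by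
    obtain ⟨u, v, hau, hvb, huv, hu⟩ := hmain
      (fun i => iteratedDerivWithin (i + 1) f (Icc a b)) a b hlt
      (fun i hi x hx => by
        have hd := (hf.differentiableOn_iteratedDerivWithin (m := i + 1)
          (by exact_mod_cast (by lia : i + 1 < p)) hud x hx).hasDerivWithinAt
        rwa [← iteratedDerivWithin_succ] at hd)
      (fun x hx => by
        have := (hfp x hx).le
        rwa [← Nat.sub_add_cancel (by lia : 1 ≤ p)] at this)
    have huv' : u ≤ v := by
      rw [← sub_nonneg, huv]
      positivity
    exact (hu u ⟨le_rfl, huv'⟩).trans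
      (le_csSup hbdd ⟨u, ⟨hau, huv'.trans hvb⟩, rfl⟩)
  have hMpos : 0 < M := lt_of_lt_of_le (by positivity) hKM
  rw [if_neg hMpos.ne']
  set X := min (b - a) (1 / (|lam| * M)) with hX
  have hX0 : 0 ≤ X := le_min hba.le (by positivity)
  have hXp : X ^ p ≤ 1 / K * |lam|⁻¹ := by
    calc X ^ p = X ^ (p - 1) * X := by rw [← pow_succ, Nat.sub_add_cancel (by lia)]
      _ ≤ (b - a) ^ (p - 1) * (1 / (|lam| * M)) := by
        gcongr
        · exact min_le_left _ _
        · exact min_le_right _ _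
      _ ≤ (M / K) * (1 / (|lam| * M)) := by
        gcongr
        rw [le_div_iff₀ hK]
        linarith
      _ = 1 / K * |lam|⁻¹ := by field_simp
  calc X = (X ^ p) ^ ((p : ℝ)⁻¹) := (Real.pow_rpow_inv_natCast hX0 hp0).symm
    _ ≤ (1 / K * |lam|⁻¹) ^ ((p : ℝ)⁻¹) := by gcongr
    _ = (1 / K) ^ ((p : ℝ)⁻¹) * |lam| ^ (-(1 : ℝ) / (p : ℝ)) := by
      rw [Real.mul_rpow (by positivity) (by positivity), Real.inv_rpow hlam'.le,
        ← Real.rpow_neg hlam'.le, neg_div, one_div (p : ℝ)]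
end

section
/- Let f be a real polynomial of degree l ≥ 1 and [a,b] a compact interval such that |f'(x)| > 1 for all x ∈ [a,b]. Then for all λ ≠ 0, ∫_a^b min(1, |f''(x)| / (|λ| (f'(x))²)) dx ≤ 2l / |λ|. -/
open Set MeasureTheory Polynomial

/-!
Write `p = f'`. The integrand is at most `|λ|⁻¹ * |p'| / p²`, so it suffices to bound
`∫ |p'| / p²`, the total variation of `1 / p` on `[a, b]`. On an interval whose interior contains
no root of `p'`, the function `1 / p` is monotone with values in `[-1, 1]`, so its variation is at
most `2` (`integral_le_two_of_no_root`). Cutting at the roots of `p'` gives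
`∫ |p'| / p² ≤ 2 * (N + 1)`, where `N` is the number of roots of `p'` in `(a, b)`
(`integral_le_of_card_roots`), and `N ≤ deg f'' ≤ l - 1`.
-/

lemma continuousOn_integrand (p : ℝ[X]) {a b : ℝ} (hp : ∀ x ∈ Icc a b, 1 < |p.eval x|) :
    ContinuousOn (fun x => |(derivative p).eval x| / (p.eval x) ^ 2) (Icc a b) := by
  refine ContinuousOn.div (by fun_prop) (by fun_prop) fun x hx => ?_
  have h0 : p.eval x ≠ 0 := abs_pos.1 (zero_lt_one.trans (hp x hx))
  exact pow_ne_zero 2 h0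

lemma integral_le_two_of_no_root (p : ℝ[X]) {a b : ℝ} (hab : a ≤ b)
    (hp : ∀ x ∈ Icc a b, 1 < |p.eval x|)
    (hroot : ∀ x ∈ Ioo a b, (derivative p).eval x ≠ 0) :
    ∫ x in a..b, |(derivative p).eval x| / (p.eval x) ^ 2 ≤ 2 := by
  have hp0 : ∀ x ∈ Icc a b, p.eval x ≠ 0 := fun x hx =>
    abs_pos.1 (zero_lt_one.trans (hp x hx))
  -- By the intermediate value theorem `p'` has a constant sign `s` on `(a, b)`.
  obtain ⟨s, hs, hsq⟩ : ∃ s : ℝ, |s| = 1 ∧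
      ∀ x ∈ Ioo a b, |(derivative p).eval x| = s * (derivative p).eval x := by
    by_cases hpos : ∀ x ∈ Ioo a b, 0 < (derivative p).eval x
    · exact ⟨1, by simp, fun x hx => by rw [abs_of_pos (hpos x hx), one_mul]⟩
    · push Not at hpos
      obtain ⟨y, hy, hy0⟩ := hpos
      refine ⟨-1, by simp, fun x hx => ?_⟩
      have hx0 : (derivative p).eval x ≤ 0 := by
        by_contra! hx0
        obtain ⟨z, hz, hz0⟩ := isPreconnected_Ioo.intermediate_value hy hx
          (f := fun x => (derivative p).eval x) (by fun_prop) ⟨hy0, hx0.le⟩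
        exact hroot z hz hz0
      rw [abs_of_nonpos hx0, neg_one_mul]
  have hint : IntervalIntegrable (fun x => |(derivative p).eval x| / (p.eval x) ^ 2)
      volume a b := (continuousOn_integrand p hp).intervalIntegrable_of_Icc hab
  rw [intervalIntegral.integral_eq_sub_of_hasDerivAt_of_le (f := fun x => -s * (p.eval x)⁻¹) hab
    (ContinuousOn.mul (by fun_prop) (ContinuousOn.inv₀ (by fun_prop) hp0)) ?_ hint]
  · have key : ∀ x ∈ Icc a b, |-s * (p.eval x)⁻¹| ≤ 1 := fun x hx => by
      rw [abs_mul, abs_neg, hs, one_mul, abs_inv]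
      exact inv_le_one_of_one_le₀ (hp x hx).le
    have h1 := abs_le.1 (key a (left_mem_Icc.2 hab))
    have h2 := abs_le.1 (key b (right_mem_Icc.2 hab))
    linarith [h1.1, h2.2]
  · intro x hx
    have h := ((p.hasDerivAt x).inv (hp0 x (Ioo_subset_Icc_self hx))).const_mul (-s)
    have hval : |(derivative p).eval x| / (p.eval x) ^ 2
        = -s * (-(derivative p).eval x / (p.eval x) ^ 2) := by
      rw [hsq x hx]
      ring
    rw [hval]
    exact h

/-- Induction on the number of roots of `p'` in `(a, b)`: an interior root `c` splits the
interval into `[a, c]` and `[c, b]`, and is itself counted in neither. -/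
lemma integral_le_of_card_roots (p : ℝ[X]) (hq : derivative p ≠ 0) (n : ℕ) :
    ∀ a b : ℝ, a ≤ b → (∀ x ∈ Icc a b, 1 < |p.eval x|) →
      ((derivative p).roots.toFinset.filter (· ∈ Ioo a b)).card = n →
      ∫ x in a..b, |(derivative p).eval x| / (p.eval x) ^ 2 ≤ 2 * ((n : ℝ) + 1) := by
  classical
  induction n using Nat.strong_induction_on with
  | _ n ih =>
  intro a b hab hp hn
  by_cases hroot : ∀ x ∈ Ioo a b, (derivative p).eval x ≠ 0
  · have := integral_le_two_of_no_root p hab hp hroot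
    have hn0 : (0 : ℝ) ≤ n := n.cast_nonneg
    linarith
  push Not at hroot
  obtain ⟨c, hc, hc0⟩ := hroot
  set R := (derivative p).roots.toFinset with hR
  have hcR : c ∈ R := by simp [hR, hq, hc0]
  have hcard : (R.filter (· ∈ Ioo a c)).card + (R.filter (· ∈ Ioo c b)).card + 1 ≤ n := by
    have hdisj : Disjoint (R.filter (· ∈ Ioo a c)) (R.filter (· ∈ Ioo c b)) := by
      rw [Finset.disjoint_left]
      intro x hx hx'
      exact lt_asymm (Finset.mem_filter.1 hx).2.2 (Finset.mem_filter.1 hx').2.1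
    have hnot : c ∉ R.filter (· ∈ Ioo a c) ∪ R.filter (· ∈ Ioo c b) := by simp
    rw [← Finset.card_union_of_disjoint hdisj, ← Finset.card_insert_of_notMem hnot, ← hn]
    refine Finset.card_le_card fun x hx => ?_
    simp only [Finset.mem_insert, Finset.mem_union, Finset.mem_filter] at hx ⊢
    rcases hx with rfl | ⟨hx, h⟩ | ⟨hx, h⟩
    · exact ⟨hcR, hc⟩
    · exact ⟨hx, h.1, h.2.trans hc.2⟩
    · exact ⟨hx, hc.1.trans h.1, h.2⟩
  have hpl : ∀ x ∈ Icc a c, 1 < |p.eval x| := fun x hx => hp x ⟨hx.1, hx.2.trans hc.2.le⟩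
  have hpr : ∀ x ∈ Icc c b, 1 < |p.eval x| := fun x hx => hp x ⟨hc.1.le.trans hx.1, hx.2⟩
  have hl := ih _ (by omega) a c hc.1.le hpl rfl
  have hr := ih _ (by omega) c b hc.2.le hpr rfl
  rw [← intervalIntegral.integral_add_adjacent_intervals
    ((continuousOn_integrand p hpl).intervalIntegrable_of_Icc hc.1.le)
    ((continuousOn_integrand p hpr).intervalIntegrable_of_Icc hc.2.le)]
  have hcard' : ((R.filter (· ∈ Ioo a c)).card : ℝ) + (R.filter (· ∈ Ioo c b)).card + 1 ≤ n := by
    exact_mod_cast hcard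
  linarith

/-- **Estimate (4.9).** Let `f` be a real polynomial of degree `l ≥ 1` and `[a,b]` a compact
interval with `|f'(x)| > 1` on `[a,b]`. Then for all `λ ≠ 0`,
`∫_a^b min(1, |f''(x)|/(|λ|(f'(x))²)) dx ≤ 2l/|λ|`. -/
theorem stmt18 (f : Polynomial ℝ) (l : ℕ) (hdeg : f.natDegree = l) (hl : 1 ≤ l)
    (a b : ℝ) (hab : a ≤ b)
    (hf' : ∀ x ∈ Icc a b, 1 < |(derivative f).eval x|) :
    ∀ lam : ℝ, lam ≠ 0 →
      (∫ x in a..b,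
          min 1 (|(derivative (derivative f)).eval x| /
            (|lam| * ((derivative f).eval x) ^ 2))) ≤
        2 * (l : ℝ) / |lam| := by
  classical
  intro lam hlam
  have hlam' : 0 < |lam| := abs_pos.2 hlam
  have hmain : ∫ x in a..b, |(derivative (derivative f)).eval x| / ((derivative f).eval x) ^ 2
      ≤ 2 * (l : ℝ) := by
    by_cases hq : derivative (derivative f) = 0
    · simp [hq]
    · have h := integral_le_of_card_roots (derivative f) hq _ a b hab hf' rfl
      have hcard : ((derivative (derivative f)).roots.toFinset.filter (· ∈ Ioo a b)).card + 1
          ≤ l := by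
        have h1 := Finset.card_filter_le (derivative (derivative f)).roots.toFinset (· ∈ Ioo a b)
        have h2 := Multiset.toFinset_card_le (derivative (derivative f)).roots
        have h3 := card_roots' (derivative (derivative f))
        have h4 := natDegree_derivative_le (derivative f)
        have h5 := natDegree_derivative_le f
        omega
      have hcard' : (((derivative (derivative f)).roots.toFinset.filter
          (· ∈ Ioo a b)).card : ℝ) + 1 ≤ l := by exact_mod_cast hcard
      exact h.trans (by linarith)
  have hcont := continuousOn_integrand (derivative f) hf'
  have heq : ∀ x, |(derivative (derivative f)).eval x| / (|lam| * ((derivative f).eval x) ^ 2)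
      = |(derivative (derivative f)).eval x| / ((derivative f).eval x) ^ 2 / |lam| := fun x => by
    rw [div_div, mul_comm]
  simp only [heq]
  calc _ ≤ ∫ x in a..b,
        |(derivative (derivative f)).eval x| / ((derivative f).eval x) ^ 2 / |lam| :=
        intervalIntegral.integral_mono_on hab
          ((ContinuousOn.inf continuousOn_const (hcont.div_const _)).intervalIntegrable_of_Icc hab)
          ((hcont.div_const _).intervalIntegrable_of_Icc hab) fun x _ => min_le_right _ _
    _ ≤ 2 * (l : ℝ) / |lam| := by
        rw [intervalIntegral.integral_div]
        gcongr
end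

section
/- Let f be a C³ real-valued function on a compact interval [c,d] such that f' is nonvanishing on [c,d], f'' and f''' are each nonvanishing on the open interval (c,d), sup_{x∈[c,d]} |f'(x)| ≤ 2·inf_{x∈[c,d]} |f'(x)|, and |f''(c)|/(f'(c))² = 1 and |f''(d)|/(f'(d))² = 1. Then for all x ∈ [c,d], |f''(x)|/(f'(x))² ≥ 1/4. -/
/-!
Since `f'''` does not vanish on `(c,d)`, Rolle's theorem makes `f''` injective, hence strictly
monotone, on `[c,d]`. Moreover `f''` has no zero on `[c,d]` (at the endpoints because
`|f''| = (f')² > 0` there), so it has constant sign and `|f''|` is bounded below by its smaller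
endpoint value. That value is `(f')²` at an endpoint, and the hypothesis `sup |f'| ≤ 2 inf |f'|`
bounds it below by `(f'(x))² / 4`.
-/

open Set

/-- A continuous function without zeros on `[c,d]` whose derivative has no zeros on `(c,d)` is
monotone of constant sign, so its modulus is at least the smaller of the two endpoint values. -/
lemma abs_endpoint_le {c d : ℝ} (hcd : c ≤ d) {h : ℝ → ℝ} (hcont : ContinuousOn h (Icc c d))
    (h0 : ∀ x ∈ Icc c d, h x ≠ 0) (h1 : ∀ x ∈ Ioo c d, deriv h x ≠ 0) {x : ℝ}
    (hx : x ∈ Icc c d) : |h c| ≤ |h x| ∨ |h d| ≤ |h x| := by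
  have hcm : c ∈ Icc c d := left_mem_Icc.2 hcd
  have hdm : d ∈ Icc c d := right_mem_Icc.2 hcd
  have key : ∀ a ∈ Icc c d, ∀ b ∈ Icc c d, a < b → h a ≠ h b := by
    intro a ha b hb hab heq
    obtain ⟨z, hz, hz0⟩ :=
      exists_deriv_eq_zero hab (hcont.mono (Icc_subset_Icc ha.1 hb.2)) heq
    exact h1 z ⟨ha.1.trans_lt hz.1, hz.2.trans_le hb.2⟩ hz0
  have hinj : InjOn h (Icc c d) := by
    intro a ha b hb heq
    rcases lt_trichotomy a b with hab | hab | hab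
    · exact absurd heq (key a ha b hb hab)
    · exact hab
    · exact absurd heq.symm (key b hb a ha hab)
  rcases hcont.strictMonoOn_of_injOn_Icc' hcd hinj with hm | hm
  · have e1 := hm.monotoneOn hcm hx hx.1
    have e2 := hm.monotoneOn hx hdm hx.2
    rcases lt_or_ge 0 (h c) with hp | hp
    · left
      rwa [abs_of_pos hp, abs_of_pos (hp.trans_le e1)]
    · right
      have hn : h d ≤ 0 := by
        by_contra! hpos
        obtain ⟨z, hz, hz0⟩ := intermediate_value_Icc hcd hcont ⟨hp, hpos.le⟩
        exact h0 z hz hz0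
      rw [abs_of_nonpos hn, abs_of_nonpos (e2.trans hn)]
      linarith
  · have e1 := hm.antitoneOn hcm hx hx.1
    have e2 := hm.antitoneOn hx hdm hx.2
    rcases lt_or_ge 0 (h d) with hp | hp
    · right
      rwa [abs_of_pos hp, abs_of_pos (hp.trans_le e2)]
    · left
      have hn : h c ≤ 0 := by
        by_contra! hpos
        obtain ⟨z, hz, hz0⟩ := intermediate_value_Icc' hcd hcont ⟨hp, hpos.le⟩
        exact h0 z hz hz0
      rw [abs_of_nonpos hn, abs_of_nonpos (e1.trans hn)]
      linarith

/-- **Lower bound (5.31) for type 2B intervals.** Let `f` be `C³` on a compact interval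
`[c,d]` with `f'` nonvanishing on `[c,d]`, `f''` and `f'''` nonvanishing on `(c,d)`,
`sup_{[c,d]}|f'| ≤ 2·inf_{[c,d]}|f'|`, and `|f''(c)|/(f'(c))² = 1 = |f''(d)|/(f'(d))²`.
Then `|f''(x)|/(f'(x))² ≥ 1/4` for all `x ∈ [c,d]`. -/
theorem stmt19 (c d : ℝ) (hcd : c ≤ d) (f : ℝ → ℝ)
    (hf : ContDiffOn ℝ 3 f (Icc c d))
    (hf' : ∀ x ∈ Icc c d, iteratedDerivWithin 1 f (Icc c d) x ≠ 0)
    (hf'' : ∀ x ∈ Ioo c d, iteratedDerivWithin 2 f (Icc c d) x ≠ 0)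
    (hf''' : ∀ x ∈ Ioo c d, iteratedDerivWithin 3 f (Icc c d) x ≠ 0)
    (htype2 : sSup ((fun x => |iteratedDerivWithin 1 f (Icc c d) x|) '' Icc c d) ≤
      2 * sInf ((fun x => |iteratedDerivWithin 1 f (Icc c d) x|) '' Icc c d))
    (hc : |iteratedDerivWithin 2 f (Icc c d) c| / (iteratedDerivWithin 1 f (Icc c d) c) ^ 2 = 1)
    (hd : |iteratedDerivWithin 2 f (Icc c d) d| / (iteratedDerivWithin 1 f (Icc c d) d) ^ 2 = 1) :
    ∀ x ∈ Icc c d,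
      1 / 4 ≤
        |iteratedDerivWithin 2 f (Icc c d) x| / (iteratedDerivWithin 1 f (Icc c d) x) ^ 2 := by
  intro x hx
  rcases hcd.eq_or_lt with rfl | hlt
  · obtain rfl : x = c := le_antisymm hx.2 hx.1
    rw [hc]
    norm_num
  have hu : UniqueDiffOn ℝ (Icc c d) := uniqueDiffOn_Icc hlt
  have hcm : c ∈ Icc c d := left_mem_Icc.2 hcd
  have hdm : d ∈ Icc c d := right_mem_Icc.2 hcd
  have hgcont : ContinuousOn (iteratedDerivWithin 1 f (Icc c d)) (Icc c d) :=
    hf.continuousOn_iteratedDerivWithin (by norm_num) hu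
  have hhcont : ContinuousOn (iteratedDerivWithin 2 f (Icc c d)) (Icc c d) :=
    hf.continuousOn_iteratedDerivWithin (by norm_num) hu
  have hderiv : ∀ y ∈ Ioo c d, deriv (iteratedDerivWithin 2 f (Icc c d)) y ≠ 0 := by
    intro y hy
    have := hf''' y hy
    rwa [iteratedDerivWithin_succ, derivWithin_of_mem_nhds (Icc_mem_nhds hy.1 hy.2)] at this
  generalize iteratedDerivWithin 1 f (Icc c d) = g at *
  generalize iteratedDerivWithin 2 f (Icc c d) = h at *
  have hgpos : ∀ y ∈ Icc c d, 0 < g y ^ 2 := fun y hy => by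
    have := hf' y hy
    positivity
  rw [div_eq_one_iff_eq (hgpos c hcm).ne'] at hc
  rw [div_eq_one_iff_eq (hgpos d hdm).ne'] at hd
  have h0 : ∀ y ∈ Icc c d, h y ≠ 0 := by
    intro y hy
    rcases hy.1.eq_or_lt with rfl | h1
    · exact abs_pos.1 (hc ▸ hgpos _ hy)
    rcases hy.2.eq_or_lt with rfl | h2
    · exact abs_pos.1 (hd ▸ hgpos _ hy)
    exact hf'' y ⟨h1, h2⟩
  have hcomp : IsCompact ((fun x => |g x|) '' Icc c d) :=
    isCompact_Icc.image_of_continuousOn hgcont.abs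
  have hratio : ∀ y ∈ Icc c d, g x ^ 2 ≤ 4 * g y ^ 2 := by
    intro y hy
    have s1 := le_csSup hcomp.bddAbove (mem_image_of_mem (fun x => |g x|) hx)
    have s2 := csInf_le hcomp.bddBelow (mem_image_of_mem (fun x => |g x|) hy)
    have s3 : |g x| ≤ 2 * |g y| := by
      linarith
    rw [← sq_abs (g x), ← sq_abs (g y)]
    nlinarith [abs_nonneg (g x), abs_nonneg (g y)]
  rw [le_div_iff₀ (hgpos x hx)]
  rcases abs_endpoint_le hcd hhcont h0 hderiv hx with h1 | h1
  · linarith [hratio c hcm]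
  · linarith [hratio d hdm]
end
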